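/- For u^{in}, f ∈ ℓ²(ℂ) and 0 < T < ∞, there exists a weak solution u ∈ L^∞([0,T], H) ∩ C([0,T], H_weak) of the inviscid sabra shell model, i.e. ⟨u(t), v⟩ + ∫₀ᵗ ⟨B(u(s),u(s)), v⟩ ds = ⟨u^{in}, v⟩ + t⟨f, v⟩ for all v ∈ V = D(A^{1/2}) and t ∈ [0,T]; moreover du/dt ∈ L^∞([0,T], V_{-1}). -/

import Mathlib

open Complex MeasureTheory

/-- Wavenumbers of the sabra shell model: `k n = k0 * λ^n`. -/
noncomputable def kk (k0 lam : ℝ) (n : ℤ) : ℝ := k0 * lam ^ n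

/-- Nonlinear term of the sabra shell model. -/
noncomputable def sB (a b c k0 lam : ℝ) (u : ℤ → ℂ) (n : ℤ) : ℂ :=
  -Complex.I * ((a : ℂ) * (kk k0 lam (n + 1) : ℝ) * u (n + 2) * (starRingEnd ℂ) (u (n + 1))
    + (b : ℂ) * (kk k0 lam n : ℝ) * u (n + 1) * (starRingEnd ℂ) (u (n - 1))
    - (c : ℂ) * (kk k0 lam (n - 1) : ℝ) * u (n - 1) * u (n - 2))

/-- Membership in `V = D(A^{1/2})` (test functions): zero boundary components and
`∑ k_n² |v_n|² < ∞`. -/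
def InTestV (k0 lam : ℝ) (v : ℤ → ℂ) : Prop :=
  (∀ n : ℤ, n ≤ 0 → v n = 0) ∧
  Summable fun n : ℕ => (kk k0 lam ((n : ℤ) + 1)) ^ 2 * ‖v ((n : ℤ) + 1)‖ ^ 2

/-- A weak solution of the forced inviscid sabra shell model on `[0,T]`:
`u ∈ L^∞([0,T],H) ∩ C([0,T],H_w)` (componentwise continuity plus a uniform ℓ² bound)
satisfying `⟨u(t),v⟩ + ∫₀ᵗ ⟨B(u(s),u(s)),v⟩ ds = ⟨u^{in},v⟩ + t⟨f,v⟩` for all `v ∈ V`. -/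
def IsWeakSolution (a b c k0 lam T : ℝ) (uin f : ℤ → ℂ) (u : ℝ → ℤ → ℂ) : Prop :=
  (∀ t : ℝ, ∀ n : ℤ, n ≤ 0 → u t n = 0) ∧
  (∃ M : ℝ, ∀ t ∈ Set.Icc (0 : ℝ) T,
    (Summable fun n : ℕ => ‖u t ((n : ℤ) + 1)‖ ^ 2) ∧
    (∑' n : ℕ, ‖u t ((n : ℤ) + 1)‖ ^ 2) ≤ M) ∧
  (∀ n : ℤ, ContinuousOn (fun t => u t n) (Set.Icc (0 : ℝ) T)) ∧
  (∀ v : ℤ → ℂ, InTestV k0 lam v → ∀ t ∈ Set.Icc (0 : ℝ) T,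
    (∑' n : ℕ, u t ((n : ℤ) + 1) * (starRingEnd ℂ) (v ((n : ℤ) + 1))) +
      (∫ s in (0 : ℝ)..t,
        ∑' n : ℕ, sB a b c k0 lam (u s) ((n : ℤ) + 1) * (starRingEnd ℂ) (v ((n : ℤ) + 1))) =
    (∑' n : ℕ, uin ((n : ℤ) + 1) * (starRingEnd ℂ) (v ((n : ℤ) + 1))) +
      (t : ℂ) * (∑' n : ℕ, f ((n : ℤ) + 1) * (starRingEnd ℂ) (v ((n : ℤ) + 1))))

section SabraShellModel

open Filter Topology

theorem kk_pos {k0 lam : ℝ} (hk0 : 0 < k0) (hlam : 1 < lam) (n : ℤ) : 0 < kk k0 lam n :=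
  mul_pos hk0 (zpow_pos (by linarith) n)

theorem kk_add_one (k0 : ℝ) {lam : ℝ} (hlam : 1 < lam) (n : ℤ) :
    kk k0 lam (n + 1) = lam * kk k0 lam n := by
  unfold kk
  rw [zpow_add_one₀ (by linarith)]
  ring

theorem kk_sub_one_le {k0 lam : ℝ} (hk0 : 0 < k0) (hlam : 1 < lam) (n : ℤ) :
    kk k0 lam (n - 1) ≤ kk k0 lam n := by
  have h := kk_add_one k0 hlam (n - 1)
  rw [sub_add_cancel] at h
  nlinarith [kk_pos hk0 hlam (n - 1)]

theorem norm_sB_le {a b c k0 lam R : ℝ} (hk0 : 0 < k0) (hlam : 1 < lam) {u : ℤ → ℂ}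
    (hu : ∀ m, ‖u m‖ ≤ R) (n : ℤ) :
    ‖sB a b c k0 lam u n‖ ≤
      (|a| * lam + |b| + |c|) * R * kk k0 lam n * (‖u (n + 1)‖ + ‖u (n - 1)‖) := by
  have hk := kk_pos hk0 hlam n
  have hk' := kk_pos hk0 hlam (n - 1)
  have hle := kk_sub_one_le hk0 hlam n
  have hR : 0 ≤ R := (norm_nonneg _).trans (hu 0)
  have hnorm (m : ℤ) : ‖((kk k0 lam m : ℝ) : ℂ)‖ = kk k0 lam m := by
    rw [Complex.norm_real, Real.norm_of_nonneg (kk_pos hk0 hlam m).le]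
  have ha : ‖(a : ℂ) * (kk k0 lam (n + 1) : ℝ) * u (n + 2) * (starRingEnd ℂ) (u (n + 1))‖
      ≤ |a| * (lam * kk k0 lam n) * R * ‖u (n + 1)‖ := by
    rw [norm_mul, norm_mul, norm_mul, RCLike.norm_conj, Complex.norm_real, hnorm,
      kk_add_one k0 hlam, Real.norm_eq_abs]
    gcongr
    exact hu _
  have hb : ‖(b : ℂ) * (kk k0 lam n : ℝ) * u (n + 1) * (starRingEnd ℂ) (u (n - 1))‖
      ≤ |b| * kk k0 lam n * ‖u (n + 1)‖ * R := by
    rw [norm_mul, norm_mul, norm_mul, RCLike.norm_conj, Complex.norm_real, hnorm,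
      Real.norm_eq_abs]
    gcongr
    exact hu _
  have hc : ‖(c : ℂ) * (kk k0 lam (n - 1) : ℝ) * u (n - 1) * u (n - 2)‖
      ≤ |c| * kk k0 lam n * ‖u (n - 1)‖ * R := by
    rw [norm_mul, norm_mul, norm_mul, Complex.norm_real, hnorm, Real.norm_eq_abs]
    gcongr
    exact hu _
  have hlam0 : 0 < lam := by linarith
  have e1 : 0 ≤ |a| * (lam * kk k0 lam n) * R * ‖u (n - 1)‖ := by positivity
  have e2 : 0 ≤ |b| * kk k0 lam n * ‖u (n - 1)‖ * R := by positivity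
  have e3 : 0 ≤ |c| * kk k0 lam n * ‖u (n + 1)‖ * R := by positivity
  rw [sB, norm_mul, norm_neg, Complex.norm_I, one_mul]
  refine ((norm_sub_le _ _).trans (add_le_add_left (norm_add_le _ _) _)).trans ?_
  linarith

/-- The trilinear flux through the shell `n`. -/
noncomputable def sabraFlux (k0 lam : ℝ) (u : ℤ → ℂ) (n : ℤ) : ℝ :=
  ((kk k0 lam (n + 1) : ℝ) * u (n + 2) * (starRingEnd ℂ) (u (n + 1)) *
    (starRingEnd ℂ) (u n) : ℂ).im

theorem inner_sB_eq_flux (a b c k0 lam : ℝ) (u : ℤ → ℂ) (n : ℤ) :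
    inner ℝ (u n) (sB a b c k0 lam u n) =
      a * sabraFlux k0 lam u n + b * sabraFlux k0 lam u (n - 1) +
        c * sabraFlux k0 lam u (n - 2) := by
  have h1 : n - 1 + 1 = n := by ring
  have h2 : n - 1 + 2 = n + 1 := by ring
  have h3 : n - 2 + 1 = n - 1 := by ring
  have h4 : n - 2 + 2 = n := by ring
  simp only [sabraFlux, sB, h1, h2, h3, h4, Complex.inner, Complex.mul_re, Complex.mul_im,
    Complex.add_re, Complex.add_im, Complex.sub_re, Complex.sub_im, Complex.neg_re,
    Complex.neg_im, Complex.I_re, Complex.I_im, Complex.conj_re, Complex.conj_im,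
    Complex.ofReal_re, Complex.ofReal_im]
  ring

/-- The nonlinearity conserves the energy of states supported in finitely many shells. -/
theorem sum_inner_sB_eq_zero {a b c : ℝ} (k0 lam : ℝ) (habc : a + b + c = 0) {u : ℤ → ℂ}
    {s : Finset ℤ} (hu : ∀ n ∉ s, u n = 0) :
    ∑ n ∈ s, inner ℝ (u n) (sB a b c k0 lam u n) = 0 := by
  have hX (n : ℤ) (hn : n ∉ s) : sabraFlux k0 lam u n = 0 := by simp [sabraFlux, hu n hn]
  have hsum : HasSum (sabraFlux k0 lam u) (∑ n ∈ s, sabraFlux k0 lam u n) :=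
    hasSum_sum_of_ne_finset_zero hX
  have hshift (m : ℤ) :
      HasSum (fun n => sabraFlux k0 lam u (n - m)) (∑ n ∈ s, sabraFlux k0 lam u n) :=
    (Equiv.subRight m).hasSum_iff.2 hsum
  have h := ((hsum.mul_left a).add ((hshift 1).mul_left b)).add ((hshift 2).mul_left c)
  simp only [← inner_sB_eq_flux] at h
  have h' : HasSum (fun n => inner ℝ (u n) (sB a b c k0 lam u n))
      (∑ n ∈ s, inner ℝ (u n) (sB a b c k0 lam u n)) :=
    hasSum_sum_of_ne_finset_zero fun n hn => by rw [hu n hn, inner_zero_left]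
  rw [h'.unique h, ← add_mul, ← add_mul, habc, zero_mul]

theorem le_exp_of_hasDerivWithinAt_le {E E' : ℝ → ℝ} {F T : ℝ}
    (hE : ∀ t ∈ Set.Icc 0 T, HasDerivWithinAt E (E' t) (Set.Icc 0 T) t)
    (hle : ∀ t ∈ Set.Icc 0 T, E' t ≤ E t + F) (hF : 0 ≤ F) {t : ℝ} (ht : t ∈ Set.Icc 0 T) :
    E t ≤ (E 0 + F) * Real.exp t := by
  have hD (s : ℝ) (hs : s ∈ Set.Icc 0 T) :
      HasDerivWithinAt (fun s => Real.exp (-s) * (E s + F))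
        (Real.exp (-s) * (-1) * (E s + F) + Real.exp (-s) * E' s) (Set.Icc 0 T) s :=
    ((hasDerivAt_id s).fun_neg.exp.hasDerivWithinAt).mul ((hE s hs).add_const F)
  have hanti : AntitoneOn (fun s => Real.exp (-s) * (E s + F)) (Set.Icc 0 T) := by
    refine antitoneOn_of_hasDerivWithinAt_nonpos (convex_Icc 0 T)
      (fun s hs => (hD s hs).continuousWithinAt)
      (fun s hs => (hD s (interior_subset hs)).mono interior_subset) fun s hs => ?_
    have h1 := hle s (interior_subset hs)
    have h2 := Real.exp_pos (-s)
    nlinarith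
  have h := hanti ⟨le_rfl, ht.1.trans ht.2⟩ ht ht.1
  simp only [neg_zero, Real.exp_zero, one_mul, Real.exp_neg] at h
  rw [inv_mul_le_iff₀ (Real.exp_pos t)] at h
  linarith

/-- Extension by zero of a state on the shells `1, …, N`. -/
noncomputable def extendShells (N : ℕ) (x : Finset.Icc (1 : ℤ) N → ℂ) (n : ℤ) : ℂ :=
  if h : n ∈ Finset.Icc (1 : ℤ) N then x ⟨n, h⟩ else 0

theorem extendShells_of_notMem {N : ℕ} (x : Finset.Icc (1 : ℤ) N → ℂ) {n : ℤ}
    (h : n ∉ Finset.Icc (1 : ℤ) N) : extendShells N x n = 0 := dif_neg h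

theorem extendShells_of_mem {N : ℕ} (x : Finset.Icc (1 : ℤ) N → ℂ) {n : ℤ}
    (h : n ∈ Finset.Icc (1 : ℤ) N) : extendShells N x n = x ⟨n, h⟩ := dif_pos h

theorem contDiff_extendShells (N : ℕ) (n : ℤ) :
    ContDiff ℝ 1 fun x : Finset.Icc (1 : ℤ) N → ℂ => extendShells N x n := by
  by_cases h : n ∈ Finset.Icc (1 : ℤ) N
  · simp only [extendShells_of_mem _ h]
    exact contDiff_apply ℝ ℂ _
  · simp only [extendShells_of_notMem _ h]
    exact contDiff_const

theorem contDiff_sB_extendShells (a b c k0 lam : ℝ) (N : ℕ) (n : ℤ) :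
    ContDiff ℝ 1 fun x : Finset.Icc (1 : ℤ) N → ℂ =>
      sB a b c k0 lam (extendShells N x) n := by
  have h := contDiff_extendShells N
  have hconj (m : ℤ) : ContDiff ℝ 1 fun x : Finset.Icc (1 : ℤ) N → ℂ =>
      (starRingEnd ℂ) (extendShells N x m) := Complex.conjCLE.contDiff.comp (h m)
  exact contDiff_const.mul ((((contDiff_const.mul (h _)).mul (hconj _)).add
    ((contDiff_const.mul (h _)).mul (hconj _))).sub ((contDiff_const.mul (h _)).mul (h _)))

/-- A bounded globally Lipschitz vector field has integral curves on every interval `[0,T]`. -/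
theorem exists_hasDerivWithinAt_of_lipschitzWith {E : Type*} [NormedAddCommGroup E]
    [NormedSpace ℝ E] [CompleteSpace E] {V : E → E} {K : NNReal} (hV : LipschitzWith K V)
    {C : ℝ} (hC : ∀ x, ‖V x‖ ≤ C) {T : ℝ} (hT : 0 ≤ T) (x₀ : E) :
    ∃ α : ℝ → E, α 0 = x₀ ∧
      ∀ t ∈ Set.Icc 0 T, HasDerivWithinAt α (V (α t)) (Set.Icc 0 T) t := by
  have hC0 : 0 ≤ C := (norm_nonneg _).trans (hC x₀)
  have hPL : IsPicardLindelof (fun _ => V) (⟨0, le_rfl, hT⟩ : Set.Icc 0 T) x₀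
      (C.toNNReal * T.toNNReal) 0 C.toNNReal K := by
    refine .of_time_independent (fun x _ => ?_) hV.lipschitzOnWith ?_
    · rw [Real.coe_toNNReal _ hC0]
      exact hC x
    · simp [hT, hC0]
  exact hPL.exists_eq_forall_mem_Icc_hasDerivWithinAt₀

/-- Finite-dimensional approximations, with the nonlinearity possibly cut off at high energy. -/
theorem exists_cutoff_galerkin (a b c k0 lam : ℝ) {T : ℝ} (hT : 0 ≤ T) (uin f : ℤ → ℂ)
    (N : ℕ) {R : ℝ} (hR : 0 < R) :
    ∃ (w : ℝ → ℤ → ℂ) (χ : ℝ → ℝ),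
      (∀ t, ∀ n ∉ Finset.Icc (1 : ℤ) N, w t n = 0) ∧
      (∀ n ∈ Finset.Icc (1 : ℤ) N, w 0 n = uin n) ∧
      (∀ t, (∀ n, ‖w t n‖ ≤ R) → χ t = 1) ∧
      ∀ n ∈ Finset.Icc (1 : ℤ) N, ∀ t ∈ Set.Icc 0 T,
        HasDerivWithinAt (fun t => w t n) (f n - χ t • sB a b c k0 lam (w t) n)
          (Set.Icc 0 T) t := by
  let φ : ContDiffBump (0 : Finset.Icc (1 : ℤ) N → ℂ) := ⟨R, R + 1, hR, by linarith⟩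
  let G : (Finset.Icc (1 : ℤ) N → ℂ) → (Finset.Icc (1 : ℤ) N → ℂ) :=
    fun x => φ x • fun i : Finset.Icc (1 : ℤ) N => sB a b c k0 lam (extendShells N x) i
  have hG : ContDiff ℝ 1 G :=
    φ.contDiff.smul (contDiff_pi.2 fun i => contDiff_sB_extendShells a b c k0 lam N i)
  have hsupp : HasCompactSupport G := φ.hasCompactSupport.smul_right
  obtain ⟨K, hK⟩ := hG.lipschitzWith_of_hasCompactSupport hsupp one_ne_zero
  obtain ⟨C, hC⟩ := hsupp.exists_bound_of_continuous hG.continuous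
  let g : Finset.Icc (1 : ℤ) N → ℂ := fun i => f i
  obtain ⟨α, hα0, hα⟩ := exists_hasDerivWithinAt_of_lipschitzWith
    (V := fun x => g - G x) ((LipschitzWith.const g).sub hK)
    (fun x => (norm_sub_le _ _).trans (add_le_add_right (hC x) _)) hT (fun i => uin i)
  refine ⟨fun t => extendShells N (α t), fun t => φ (α t),
    fun t n hn => extendShells_of_notMem _ hn, fun n hn => ?_, fun t ht => ?_,
    fun n hn t ht => ?_⟩
  · simp only [hα0, extendShells_of_mem _ hn]
  · refine φ.one_of_mem_closedBall (mem_closedBall_zero_iff.2 ?_)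
    refine (pi_norm_le_iff_of_nonneg hR.le).2 fun i => ?_
    simpa only [extendShells_of_mem _ i.2] using ht i
  · simp only [extendShells_of_mem _ hn]
    exact hasDerivWithinAt_pi.1 (hα t ht) ⟨n, hn⟩

/-- Galerkin approximations of the sabra shell model, with an energy bound which is uniform in
the number of shells. -/
theorem exists_galerkin {a b c : ℝ} (k0 lam : ℝ) (habc : a + b + c = 0) {T : ℝ} (hT : 0 ≤ T)
    {uin f : ℤ → ℂ} {A F : ℝ} (hA : ∀ s : Finset ℤ, ∑ n ∈ s, ‖uin n‖ ^ 2 ≤ A)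
    (hF : ∀ s : Finset ℤ, ∑ n ∈ s, ‖f n‖ ^ 2 ≤ F) (N : ℕ) :
    ∃ w : ℝ → ℤ → ℂ,
      (∀ t, ∀ n ∉ Finset.Icc (1 : ℤ) N, w t n = 0) ∧
      (∀ n ∈ Finset.Icc (1 : ℤ) N, w 0 n = uin n) ∧
      (∀ t ∈ Set.Icc 0 T, ∀ s : Finset ℤ, ∑ n ∈ s, ‖w t n‖ ^ 2 ≤ (A + F) * Real.exp T) ∧
      ∀ n ∈ Finset.Icc (1 : ℤ) N, ∀ t ∈ Set.Icc 0 T,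
        HasDerivWithinAt (fun t => w t n) (f n - sB a b c k0 lam (w t) n) (Set.Icc 0 T) t := by
  have hA0 : 0 ≤ A := by simpa using hA ∅
  have hF0 : 0 ≤ F := by simpa using hF ∅
  set M := (A + F) * Real.exp T with hM
  have hM0 : 0 ≤ M := by positivity
  obtain ⟨w, χ, hw0, hwin, hχ, hw⟩ := exists_cutoff_galerkin a b c k0 lam hT uin f N
    (R := √M + 1) (by positivity)
  set S := Finset.Icc (1 : ℤ) N
  have henergy (t : ℝ) (ht : t ∈ Set.Icc 0 T) : ∑ n ∈ S, ‖w t n‖ ^ 2 ≤ M := by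
    have hD (t : ℝ) (ht : t ∈ Set.Icc 0 T) :
        HasDerivWithinAt (fun t => ∑ n ∈ S, ‖w t n‖ ^ 2)
          (∑ n ∈ S, 2 * inner ℝ (w t n) (f n - χ t • sB a b c k0 lam (w t) n))
          (Set.Icc 0 T) t :=
      .fun_sum fun n hn => (hw n hn t ht).norm_sq
    have hle (t : ℝ) (_ : t ∈ Set.Icc 0 T) :
        ∑ n ∈ S, 2 * inner ℝ (w t n) (f n - χ t • sB a b c k0 lam (w t) n) ≤
          ∑ n ∈ S, ‖w t n‖ ^ 2 + F := by
      have hzero := sum_inner_sB_eq_zero (a := a) (b := b) (c := c) k0 lam habc (hw0 t)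
      have hterm (n : ℤ) : 2 * inner ℝ (w t n) (f n) ≤ ‖w t n‖ ^ 2 + ‖f n‖ ^ 2 := by
        have h := norm_sub_sq_real (w t n) (f n)
        nlinarith [sq_nonneg ‖w t n - f n‖]
      calc _ = ∑ n ∈ S, 2 * inner ℝ (w t n) (f n)
            - 2 * χ t * ∑ n ∈ S, inner ℝ (w t n) (sB a b c k0 lam (w t) n) := by
            rw [Finset.mul_sum, ← Finset.sum_sub_distrib]
            refine Finset.sum_congr rfl fun n _ => ?_
            rw [inner_sub_right, real_inner_smul_right]
            ring
        _ = ∑ n ∈ S, 2 * inner ℝ (w t n) (f n) := by rw [hzero, mul_zero, sub_zero]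
        _ ≤ ∑ n ∈ S, (‖w t n‖ ^ 2 + ‖f n‖ ^ 2) := Finset.sum_le_sum fun n _ => hterm n
        _ ≤ _ := by
            rw [Finset.sum_add_distrib]
            exact add_le_add_right (hF S) _
    refine (le_exp_of_hasDerivWithinAt_le hD hle hF0 ht).trans ?_
    have h0 : ∑ n ∈ S, ‖w 0 n‖ ^ 2 ≤ A :=
      (Finset.sum_congr rfl fun n hn => by rw [hwin n hn]).trans_le (hA S)
    rw [hM]
    gcongr
    exact ht.2
  have hbound (t : ℝ) (ht : t ∈ Set.Icc 0 T) (s : Finset ℤ) : ∑ n ∈ s, ‖w t n‖ ^ 2 ≤ M := by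
    classical
    refine le_trans ?_ (henergy t ht)
    rw [← Finset.sum_filter_of_ne (p := (· ∈ S))]
    · exact Finset.sum_le_sum_of_subset_of_nonneg (fun n hn => (Finset.mem_filter.1 hn).2)
        fun _ _ _ => sq_nonneg _
    · intro n _ hn
      contrapose! hn
      simp [hw0 t n hn]
  refine ⟨w, hw0, hwin, hbound, fun n hn t ht => ?_⟩
  have hone : χ t = 1 := hχ t fun m => by
    have h := hbound t ht {m}
    rw [Finset.sum_singleton] at h
    exact (Real.le_sqrt_of_sq_le h).trans (by linarith)
  simpa only [hone, one_smul] using hw n hn t ht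

/-- Componentwise Arzelà–Ascoli with a diagonal extraction. -/
theorem exists_subseq_tendsto_of_lipschitzOnWith {ι : Type*} [Countable ι] {T R : ℝ} (hT : 0 ≤ T)
    {w : ℕ → ℝ → ι → ℂ} {L : ι → NNReal}
    (hL : ∀ N n, LipschitzOnWith (L n) (fun t => w N t n) (Set.Icc 0 T))
    (hR : ∀ N n, ∀ t ∈ Set.Icc 0 T, ‖w N t n‖ ≤ R) :
    ∃ (φ : ℕ → ℕ) (u : ℝ → ι → ℂ), StrictMono φ ∧ (∀ n, Continuous fun t => u t n) ∧
      ∀ t ∈ Set.Icc 0 T, Tendsto (fun j => w (φ j) t) atTop (𝓝 (u t)) := by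
  have hlip (N : ℕ) (n : ι) : LipschitzWith (L n) fun t : Set.Icc 0 T => w N t n :=
    lipschitzOnWith_iff_restrict.1 (hL N n)
  let g : ℕ → ι → BoundedContinuousFunction (Set.Icc 0 T) ℂ := fun N n =>
    BoundedContinuousFunction.mkOfCompact ⟨_, (hlip N n).continuous⟩
  have hcompact (n : ι) : IsCompact (closure (Set.range fun N => g N n)) := by
    refine BoundedContinuousFunction.arzela_ascoli (Metric.closedBall (0 : ℂ) R)
      (isCompact_closedBall _ _) _ ?_ ?_
    · rintro _ x ⟨N, rfl⟩
      exact mem_closedBall_zero_iff.2 (hR N n x x.2)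
    · refine (LipschitzWith.uniformEquicontinuous _ (L n) ?_).equicontinuous
      rintro ⟨_, N, rfl⟩
      exact hlip N n
  obtain ⟨G, -, φ, hφ, hG⟩ := (isCompact_univ_pi hcompact).tendsto_subseq (x := g)
    fun N n _ => subset_closure ⟨N, rfl⟩
  refine ⟨φ, fun t n => G n (Set.projIcc 0 T hT t), hφ,
    fun n => (G n).continuous.comp continuous_projIcc, fun t ht => ?_⟩
  refine tendsto_pi_nhds.2 fun n => ?_
  have h := ((BoundedContinuousFunction.lipschitz_eval_const
    (Set.projIcc 0 T hT t)).continuous.tendsto (G n)).comp (tendsto_pi_nhds.1 hG n)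
  refine h.congr fun j => ?_
  simp [g, Set.projIcc_of_mem hT ht]

theorem continuous_sB (a b c k0 lam : ℝ) (n : ℤ) :
    Continuous fun u : ℤ → ℂ => sB a b c k0 lam u n := by
  unfold sB
  fun_prop

theorem norm_le_sqrt_of_sum_le {u : ℤ → ℂ} {M : ℝ}
    (hu : ∀ s : Finset ℤ, ∑ n ∈ s, ‖u n‖ ^ 2 ≤ M) (n : ℤ) : ‖u n‖ ≤ √M :=
  Real.le_sqrt_of_sq_le (by simpa using hu {n})

theorem norm_sB_le_of_sum_le {a b c k0 lam M : ℝ} (hk0 : 0 < k0) (hlam : 1 < lam) {u : ℤ → ℂ}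
    (hu : ∀ s : Finset ℤ, ∑ n ∈ s, ‖u n‖ ^ 2 ≤ M) (n : ℤ) :
    ‖sB a b c k0 lam u n‖ ≤
      (|a| * lam + |b| + |c|) * √M * kk k0 lam n * (√M + √M) := by
  have h := norm_le_sqrt_of_sum_le hu
  have hk := kk_pos hk0 hlam n
  have hlam0 : 0 < lam := by linarith
  refine (norm_sB_le hk0 hlam h n).trans ?_
  gcongr
  · exact h _
  · exact h _

/-- Weak solutions of the sabra shell model exist componentwise on every time interval. -/
theorem exists_componentwise_solution {a b c k0 lam : ℝ} (hk0 : 0 < k0) (hlam : 1 < lam)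
    (habc : a + b + c = 0) {T : ℝ} (hT : 0 ≤ T) {uin f : ℤ → ℂ} {A F : ℝ}
    (hA : ∀ s : Finset ℤ, ∑ n ∈ s, ‖uin n‖ ^ 2 ≤ A)
    (hF : ∀ s : Finset ℤ, ∑ n ∈ s, ‖f n‖ ^ 2 ≤ F) :
    ∃ (u : ℝ → ℤ → ℂ) (M : ℝ),
      (∀ t, ∀ n ≤ 0, u t n = 0) ∧
      (∀ n, ContinuousOn (fun t => u t n) (Set.Icc 0 T)) ∧
      (∀ t ∈ Set.Icc 0 T, ∀ s : Finset ℤ, ∑ n ∈ s, ‖u t n‖ ^ 2 ≤ M) ∧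
      ∀ n, 1 ≤ n → ∀ t ∈ Set.Icc 0 T,
        u t n = uin n + t * f n - ∫ s in (0 : ℝ)..t, sB a b c k0 lam (u s) n := by
  choose w hw0 hwin hM hw using exists_galerkin k0 lam habc hT hA hF
  set M := (A + F) * Real.exp T
  let C : ℤ → ℝ := fun n => (|a| * lam + |b| + |c|) * √M * kk k0 lam n * (√M + √M)
  have hB (N : ℕ) (n : ℤ) (t : ℝ) (ht : t ∈ Set.Icc 0 T) :
      ‖sB a b c k0 lam (w N t) n‖ ≤ C n := norm_sB_le_of_sum_le hk0 hlam (hM N t ht) n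
  have hlip (N : ℕ) (n : ℤ) :
      LipschitzOnWith (‖f n‖ + C n).toNNReal (fun t => w N t n) (Set.Icc 0 T) := by
    by_cases hn : n ∈ Finset.Icc (1 : ℤ) N
    · refine (convex_Icc 0 T).lipschitzOnWith_of_nnnorm_hasDerivWithin_le (hw N n hn)
        fun t ht => ?_
      rw [← NNReal.coe_le_coe, coe_nnnorm]
      exact ((norm_sub_le _ _).trans (add_le_add_right (hB N n t ht) _)).trans
        (Real.le_coe_toNNReal _)
    · simp only [hw0 N _ n hn]
      exact LipschitzWith.const' 0 |>.lipschitzOnWith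
  obtain ⟨φ, u, hφ, hu, hlim⟩ := exists_subseq_tendsto_of_lipschitzOnWith hT hlip
    fun N n t ht => norm_le_sqrt_of_sum_le (hM N t ht) n
  have hwcont (N : ℕ) : ContinuousOn (w N) (Set.Icc 0 T) :=
    continuousOn_pi.2 fun n => (hlip N n).continuousOn
  have hwB (N : ℕ) (n : ℤ) : ContinuousOn (fun t => sB a b c k0 lam (w N t) n) (Set.Icc 0 T) :=
    (continuous_sB a b c k0 lam n).comp_continuousOn (hwcont N)
  let u' : ℝ → ℤ → ℂ := fun t n => if n ≤ 0 then 0 else u t n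
  have hu' (t : ℝ) (ht : t ∈ Set.Icc 0 T) : u' t = u t := by
    ext n
    by_cases hn : n ≤ 0
    · have h := tendsto_pi_nhds.1 (hlim t ht) n
      have hz (j : ℕ) : w (φ j) t n = 0 :=
        hw0 _ t n fun h => by rw [Finset.mem_Icc] at h; omega
      simp only [hz] at h
      simp only [u', if_pos hn]
      exact tendsto_nhds_unique tendsto_const_nhds h
    · simp [u', hn]
  refine ⟨u', M, fun t n hn => if_pos hn, fun n => ?_, fun t ht s => ?_, fun n hn t ht => ?_⟩
  · exact (hu n).continuousOn.congr fun t ht => by rw [hu' t ht]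
  · rw [hu' t ht]
    refine le_of_tendsto' (tendsto_finsetSum s fun n _ =>
      ((tendsto_pi_nhds.1 (hlim t ht) n).norm.pow 2)) fun j => hM _ t ht s
  · have hsub : Set.uIcc 0 t ⊆ Set.Icc 0 T := by
      rw [Set.uIcc_of_le ht.1]
      exact Set.Icc_subset_Icc_right ht.2
    have hsub' : Set.uIoc 0 t ⊆ Set.Icc 0 T := Set.uIoc_subset_uIcc.trans hsub
    have hint : Tendsto (fun j => ∫ s in (0 : ℝ)..t, sB a b c k0 lam (w (φ j) s) n) atTop
        (𝓝 (∫ s in (0 : ℝ)..t, sB a b c k0 lam (u' s) n)) := by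
      refine intervalIntegral.tendsto_integral_filter_of_dominated_convergence (fun _ => C n)
        (.of_forall fun j => ?_) (.of_forall fun j => .of_forall fun s hs => ?_)
        intervalIntegrable_const (.of_forall fun s hs => ?_)
      · exact ((hwB _ n).mono hsub').aestronglyMeasurable measurableSet_uIoc
      · exact hB _ n s (hsub' hs)
      · rw [hu' s (hsub' hs)]
        exact ((continuous_sB a b c k0 lam n).tendsto _).comp (hlim s (hsub' hs))
    refine tendsto_nhds_unique (f := fun j => w (φ j) t n) (l := atTop) ?_
      ((tendsto_const_nhds.sub hint).congr' ?_)
    · rw [hu' t ht]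
      exact tendsto_pi_nhds.1 (hlim t ht) n
    · filter_upwards [eventually_ge_atTop n.toNat] with j hj
      have hmem : n ∈ Finset.Icc (1 : ℤ) (φ j) := by
        have := hφ.id_le j
        simp only [id] at this
        rw [Finset.mem_Icc]
        omega
      have hBint : IntervalIntegrable (fun s => sB a b c k0 lam (w (φ j) s) n) volume 0 t :=
        ((hwB _ n).mono hsub).intervalIntegrable
      have hFTC := intervalIntegral.integral_eq_sub_of_hasDerivAt_of_le ht.1
        (((continuousOn_pi.1 (hwcont (φ j)) n)).mono (Set.Icc_subset_Icc_right ht.2))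
        (fun s hs => (hw (φ j) n hmem s ⟨hs.1.le, hs.2.le.trans ht.2⟩).hasDerivAt
          (Icc_mem_nhds hs.1 (hs.2.trans_le ht.2)))
        (intervalIntegrable_const.sub hBint)
      rw [intervalIntegral.integral_sub intervalIntegrable_const hBint,
        intervalIntegral.integral_const, hwin _ n hmem, sub_zero, Complex.real_smul] at hFTC
      linear_combination hFTC

/-- A uniform bound on finite sums over `ℤ` controls the series over the positive shells. -/
theorem summable_shells_and_tsum_le {g : ℤ → ℝ} (hg : ∀ n, 0 ≤ g n) {M : ℝ}
    (hM : ∀ s : Finset ℤ, ∑ n ∈ s, g n ≤ M) :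
    (Summable fun n : ℕ => g ((n : ℤ) + 1)) ∧ ∑' n : ℕ, g ((n : ℤ) + 1) ≤ M := by
  have hinj : Function.Injective fun n : ℕ => (n : ℤ) + 1 := fun m n h => by simpa using h
  have hsum (s : Finset ℕ) : ∑ n ∈ s, g ((n : ℤ) + 1) ≤ M := by
    simpa using hM (s.map ⟨_, hinj⟩)
  have hs := summable_of_sum_le (fun n : ℕ => hg ((n : ℤ) + 1)) hsum
  exact ⟨hs, hs.tsum_le_of_sum_le hsum⟩

theorem exists_sum_sq_norm_le {g : ℤ → ℂ} (hg0 : ∀ n ≤ 0, g n = 0)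
    (hg : Summable fun n : ℕ => ‖g ((n : ℤ) + 1)‖ ^ 2) :
    ∃ A, ∀ s : Finset ℤ, ∑ n ∈ s, ‖g n‖ ^ 2 ≤ A := by
  have hinj : Function.Injective fun n : ℕ => (n : ℤ) + 1 := fun m n h => by simpa using h
  have hs : Summable fun n : ℤ => ‖g n‖ ^ 2 := by
    refine (hinj.summable_iff fun n hn => ?_).1 hg
    have hn0 : n ≤ 0 := by
      by_contra! h
      exact hn ⟨(n - 1).toNat, by dsimp only; omega⟩
    simp [hg0 n hn0]
  exact ⟨_, fun s => hs.sum_le_tsum s fun n _ => sq_nonneg _⟩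

theorem kk_zpow_neg_two (k0 lam : ℝ) (n : ℤ) :
    kk k0 lam n ^ (-2 : ℤ) = (kk k0 lam n ^ 2)⁻¹ := by
  rw [zpow_neg]
  rfl

theorem le_kk {k0 lam : ℝ} (hk0 : 0 < k0) (hlam : 1 < lam) {n : ℤ} (hn : 0 ≤ n) :
    k0 ≤ kk k0 lam n :=
  le_mul_of_one_le_right hk0.le (one_le_zpow₀ hlam.le hn)

/-- The nonlinearity maps bounded sets of `H` to bounded sets of `V_{-1}`. -/
theorem sum_sq_norm_sB_le {a b c k0 lam M : ℝ} (hk0 : 0 < k0) (hlam : 1 < lam) {u : ℤ → ℂ}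
    (hu : ∀ s : Finset ℤ, ∑ n ∈ s, ‖u n‖ ^ 2 ≤ M) (s : Finset ℤ) :
    ∑ n ∈ s, kk k0 lam n ^ (-2 : ℤ) * ‖sB a b c k0 lam u n‖ ^ 2 ≤
      2 * ((|a| * lam + |b| + |c|) * √M) ^ 2 * (M + M) := by
  have hshift (m : ℤ) : ∑ n ∈ s, ‖u (n + m)‖ ^ 2 ≤ M := by
    simpa using hu (s.map (Equiv.addRight m).toEmbedding)
  set D := (|a| * lam + |b| + |c|) * √M with hD
  have hterm (n : ℤ) : kk k0 lam n ^ (-2 : ℤ) * ‖sB a b c k0 lam u n‖ ^ 2 ≤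
      2 * D ^ 2 * (‖u (n + 1)‖ ^ 2 + ‖u (n + -1)‖ ^ 2) := by
    have hk := kk_pos hk0 hlam n
    have h := norm_sB_le (a := a) (b := b) (c := c) hk0 hlam (norm_le_sqrt_of_sum_le hu) n
    rw [← hD, sub_eq_add_neg] at h
    rw [kk_zpow_neg_two, inv_mul_le_iff₀ (by positivity)]
    refine (pow_le_pow_left₀ (norm_nonneg _) h 2).trans ?_
    have h2 := mul_nonneg (sq_nonneg (D * kk k0 lam n))
      (sq_nonneg (‖u (n + 1)‖ - ‖u (n + -1)‖))
    linarith
  refine (Finset.sum_le_sum fun n _ => hterm n).trans ?_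
  rw [← Finset.mul_sum, Finset.sum_add_distrib]
  gcongr
  · exact hshift 1
  · exact hshift (-1)

theorem sum_sq_norm_sub_sB_le {a b c k0 lam M F : ℝ} (hk0 : 0 < k0) (hlam : 1 < lam)
    {u f : ℤ → ℂ} (hf0 : ∀ n ≤ 0, f n = 0) (hF : ∀ s : Finset ℤ, ∑ n ∈ s, ‖f n‖ ^ 2 ≤ F)
    (hu : ∀ s : Finset ℤ, ∑ n ∈ s, ‖u n‖ ^ 2 ≤ M) (s : Finset ℤ) :
    ∑ n ∈ s, kk k0 lam n ^ (-2 : ℤ) * ‖f n - sB a b c k0 lam u n‖ ^ 2 ≤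
      2 * ((k0 ^ 2)⁻¹ * F + 2 * ((|a| * lam + |b| + |c|) * √M) ^ 2 * (M + M)) := by
  have hterm (n : ℤ) : kk k0 lam n ^ (-2 : ℤ) * ‖f n - sB a b c k0 lam u n‖ ^ 2 ≤
      2 * ((k0 ^ 2)⁻¹ * ‖f n‖ ^ 2 + kk k0 lam n ^ (-2 : ℤ) * ‖sB a b c k0 lam u n‖ ^ 2) := by
    have hk : 0 ≤ kk k0 lam n ^ (-2 : ℤ) := (zpow_pos (kk_pos hk0 hlam n) _).le
    have h1 : ‖f n - sB a b c k0 lam u n‖ ^ 2 ≤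
        2 * (‖f n‖ ^ 2 + ‖sB a b c k0 lam u n‖ ^ 2) :=
      (pow_le_pow_left₀ (norm_nonneg _) (norm_sub_le _ _) 2).trans add_sq_le
    have h2 : kk k0 lam n ^ (-2 : ℤ) * ‖f n‖ ^ 2 ≤ (k0 ^ 2)⁻¹ * ‖f n‖ ^ 2 := by
      rcases le_total n 0 with hn | hn
      · simp [hf0 n hn]
      · rw [kk_zpow_neg_two]
        gcongr
        exact le_kk hk0 hlam hn
    linarith [mul_le_mul_of_nonneg_left h1 hk]
  refine (Finset.sum_le_sum fun n _ => hterm n).trans ?_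
  rw [← Finset.mul_sum, Finset.sum_add_distrib, ← Finset.mul_sum]
  gcongr
  · exact hF s
  · exact sum_sq_norm_sB_le hk0 hlam hu s

theorem InTestV.summable_mul_conj {k0 lam : ℝ} (hk0 : 0 < k0) (hlam : 1 < lam) {g v : ℤ → ℂ}
    (hv : InTestV k0 lam v) (hg : Summable fun n : ℕ => ‖g ((n : ℤ) + 1)‖ ^ 2) :
    Summable fun n : ℕ => g ((n : ℤ) + 1) * (starRingEnd ℂ) (v ((n : ℤ) + 1)) := by
  refine .of_norm_bounded (hg.add (hv.2.mul_left (k0 ^ 2)⁻¹)) fun n => ?_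
  have h1 : ‖v ((n : ℤ) + 1)‖ ^ 2 ≤
      (k0 ^ 2)⁻¹ * (kk k0 lam ((n : ℤ) + 1) ^ 2 * ‖v ((n : ℤ) + 1)‖ ^ 2) := by
    rw [le_inv_mul_iff₀ (by positivity)]
    gcongr
    exact le_kk hk0 hlam (by positivity)
  rw [norm_mul, RCLike.norm_conj]
  nlinarith [sq_nonneg (‖g ((n : ℤ) + 1)‖ - ‖v ((n : ℤ) + 1)‖),
    sq_nonneg (‖g ((n : ℤ) + 1)‖ + ‖v ((n : ℤ) + 1)‖)]

/-- The pairing of the nonlinearity with a test function may be integrated shell by shell. -/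
theorem InTestV.hasSum_integral_sB {a b c k0 lam T M : ℝ} (hk0 : 0 < k0) (hlam : 1 < lam)
    {v : ℤ → ℂ} (hv : InTestV k0 lam v) {u : ℝ → ℤ → ℂ}
    (hcont : ∀ n, ContinuousOn (fun t => u t n) (Set.Icc 0 T))
    (hM : ∀ t ∈ Set.Icc 0 T, ∀ s : Finset ℤ, ∑ n ∈ s, ‖u t n‖ ^ 2 ≤ M)
    {t : ℝ} (ht : t ∈ Set.Icc 0 T) :
    HasSum (fun n : ℕ => (∫ s in (0 : ℝ)..t, sB a b c k0 lam (u s) ((n : ℤ) + 1)) *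
        (starRingEnd ℂ) (v ((n : ℤ) + 1)))
      (∫ s in (0 : ℝ)..t,
        ∑' n : ℕ, sB a b c k0 lam (u s) ((n : ℤ) + 1) * (starRingEnd ℂ) (v ((n : ℤ) + 1))) := by
  have hB (n : ℤ) : ContinuousOn (fun s => sB a b c k0 lam (u s) n) (Set.Icc 0 t) :=
    ((continuous_sB a b c k0 lam n).comp_continuousOn (continuousOn_pi.2 hcont)).mono
      (Set.Icc_subset_Icc_right ht.2)
  set Q := 2 * ((|a| * lam + |b| + |c|) * √M) ^ 2 * (M + M)
  let q : ℤ → ℝ → ℝ := fun n s => kk k0 lam n ^ (-2 : ℤ) * ‖sB a b c k0 lam (u s) n‖ ^ 2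
  have hq0 (n : ℤ) (s : ℝ) : 0 ≤ q n s :=
    mul_nonneg (zpow_pos (kk_pos hk0 hlam n) _).le (sq_nonneg _)
  have hq (n : ℤ) : IntervalIntegrable (q n) volume 0 t := by
    refine ContinuousOn.intervalIntegrable ?_
    rw [Set.uIcc_of_le ht.1]
    exact continuousOn_const.mul ((hB n).norm.pow 2)
  have hqsum : Summable fun n : ℕ => ∫ s in (0 : ℝ)..t, q ((n : ℤ) + 1) s := by
    refine (summable_shells_and_tsum_le (g := fun n => ∫ s in (0 : ℝ)..t, q n s) (M := t * Q)
      (fun n => intervalIntegral.integral_nonneg ht.1 fun s _ => hq0 n s) fun S => ?_).1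
    rw [← intervalIntegral.integral_finsetSum fun n _ => hq n]
    have hqS : IntervalIntegrable (fun s => ∑ n ∈ S, q n s) volume 0 t := by
      simpa only [Finset.sum_fn] using IntervalIntegrable.sum S fun n _ => hq n
    calc ∫ s in (0 : ℝ)..t, ∑ n ∈ S, q n s ≤ ∫ _ in (0 : ℝ)..t, Q :=
          intervalIntegral.integral_mono_on ht.1 hqS intervalIntegrable_const fun s hs =>
            sum_sq_norm_sB_le hk0 hlam (hM s ⟨hs.1, hs.2.trans ht.2⟩) S
      _ = t * Q := by simp
  let p : ℕ → ℝ → ℂ := fun n s =>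
    sB a b c k0 lam (u s) ((n : ℤ) + 1) * (starRingEnd ℂ) (v ((n : ℤ) + 1))
  have hp (n : ℕ) : IntervalIntegrable (p n) volume 0 t := by
    refine ContinuousOn.intervalIntegrable ?_
    rw [Set.uIcc_of_le ht.1]
    exact (hB _).mul continuousOn_const
  have hple (n : ℕ) (s : ℝ) :
      ‖p n s‖ ≤ q (n + 1) s + kk k0 lam ((n : ℤ) + 1) ^ 2 * ‖v ((n : ℤ) + 1)‖ ^ 2 := by
    have hk := kk_pos hk0 hlam ((n : ℤ) + 1)
    simp only [p, q, norm_mul, RCLike.norm_conj, kk_zpow_neg_two]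
    set k := kk k0 lam ((n : ℤ) + 1)
    set x := ‖sB a b c k0 lam (u s) ((n : ℤ) + 1)‖
    set y := ‖v ((n : ℤ) + 1)‖
    have h1 : x * y = (k⁻¹ * x) * (k * y) := by field_simp
    have h2 : (k ^ 2)⁻¹ * x ^ 2 = (k⁻¹ * x) ^ 2 := by rw [mul_pow, inv_pow]
    rw [h1, h2, ← mul_pow]
    nlinarith [sq_nonneg (k⁻¹ * x - k * y), sq_nonneg (k⁻¹ * x + k * y)]
  have hpsum : Summable fun n : ℕ => ∫ s in (0 : ℝ)..t, ‖p n s‖ := by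
    refine .of_nonneg_of_le (fun n => intervalIntegral.integral_nonneg ht.1 fun s _ =>
      norm_nonneg _) (fun n => ?_) (hqsum.add (hv.2.mul_left t))
    refine (intervalIntegral.integral_mono_on ht.1 (hp n).norm
      ((hq _).add intervalIntegrable_const) fun s _ => hple n s).trans_eq ?_
    rw [intervalIntegral.integral_add (hq _) intervalIntegrable_const,
      intervalIntegral.integral_const, sub_zero, smul_eq_mul]
  simp only [intervalIntegral.integral_of_le ht.1] at hpsum
  have h := hasSum_integral_of_summable_integral_norm
    (fun n => (intervalIntegrable_iff_integrableOn_Ioc_of_le ht.1).1 (hp n)) hpsum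
  simp only [← intervalIntegral.integral_of_le ht.1, p,
    intervalIntegral.integral_mul_const] at h
  exact h

end SabraShellModel

/-- for ℓ² data `u^{in}, f` and any `0 < T < ∞` there exists a weak solution
of the inviscid sabra shell model on `[0,T]`, with `du/dt = f - B(u,u)` bounded in
`V_{-1}` uniformly on `[0,T]`. -/
theorem sabra_weak_solution_existence
    (a b c k0 lam : ℝ) (hk0 : 0 < k0) (hlam : 1 < lam) (habc : a + b + c = 0)
    (T : ℝ) (hT : 0 < T)
    (uin f : ℤ → ℂ)
    (huin0 : ∀ n : ℤ, n ≤ 0 → uin n = 0) (hf0 : ∀ n : ℤ, n ≤ 0 → f n = 0)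
    (huin : Summable fun n : ℕ => ‖uin ((n : ℤ) + 1)‖ ^ 2)
    (hf : Summable fun n : ℕ => ‖f ((n : ℤ) + 1)‖ ^ 2) :
    ∃ u : ℝ → ℤ → ℂ, IsWeakSolution a b c k0 lam T uin f u ∧
      ∃ M : ℝ, ∀ t ∈ Set.Icc (0 : ℝ) T,
        (Summable fun n : ℕ =>
          (kk k0 lam ((n : ℤ) + 1)) ^ (-2 : ℤ) *
            ‖f ((n : ℤ) + 1) - sB a b c k0 lam (u t) ((n : ℤ) + 1)‖ ^ 2) ∧
        (∑' n : ℕ, (kk k0 lam ((n : ℤ) + 1)) ^ (-2 : ℤ) *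
            ‖f ((n : ℤ) + 1) - sB a b c k0 lam (u t) ((n : ℤ) + 1)‖ ^ 2) ≤ M := by
  obtain ⟨A, hA⟩ := exists_sum_sq_norm_le huin0 huin
  obtain ⟨F, hF⟩ := exists_sum_sq_norm_le hf0 hf
  obtain ⟨u, M, hu0, hcont, hM, hu⟩ :=
    exists_componentwise_solution hk0 hlam habc hT.le hA hF
  have hbound (t : ℝ) (ht : t ∈ Set.Icc 0 T) := summable_shells_and_tsum_le
    (g := fun n => ‖u t n‖ ^ 2) (fun n => sq_nonneg _) (hM t ht)
  have hderiv (t : ℝ) (ht : t ∈ Set.Icc 0 T) := summable_shells_and_tsum_le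
    (g := fun n => kk k0 lam n ^ (-2 : ℤ) * ‖f n - sB a b c k0 lam (u t) n‖ ^ 2)
    (fun n => mul_nonneg (zpow_pos (kk_pos hk0 hlam n) _).le (sq_nonneg _))
    (sum_sq_norm_sub_sB_le hk0 hlam hf0 hF (hM t ht))
  refine ⟨u, ⟨hu0, ⟨M, hbound⟩, hcont, fun v hv t ht => ?_⟩, _, hderiv⟩
  have hin := (hv.summable_mul_conj hk0 hlam huin).hasSum
  have hforce := (hv.summable_mul_conj hk0 hlam hf).hasSum.mul_left (t : ℂ)
  have hB := hv.hasSum_integral_sB (a := a) (b := b) (c := c) hk0 hlam hcont hM ht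
  have h := (hin.add hforce).sub hB
  have hpair (n : ℕ) := congrArg (· * (starRingEnd ℂ) (v ((n : ℤ) + 1)))
    (hu ((n : ℤ) + 1) (by omega) t ht)
  simp only [sub_mul, add_mul, mul_assoc] at hpair
  simp only [← hpair] at h
  rw [h.tsum_eq, sub_add_cancel]
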